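/- There exists a constant c > 0 such that for every real number y with |y| ≤ π, c·y² ≤ −(1/45)·cos(3y) + (3/10)·cos(2y) − 3·cos(y) + 49/18. -/

import Mathlib

/-- The discrete symbol `ψ_h⁽⁶⁾` of the sixth-order central difference approximation of `−d²/dx²`,
rescaled to be independent of the mesh width `h`: its value at `y` is `h² · ψ_h⁽⁶⁾(y / h)`.
The stencil weights, multiplied by `h²`, are `49/18` at `0`, `−3/2` at `±h`, `3/20` at `±2h` and
`−1/90` at `±3h`. -/
noncomputable def sixthOrderSymbol (y : ℝ) : ℝ :=
  -(1/45) * Real.cos (3*y) + (3/10) * Real.cos (2*y) - 3 * Real.cos y + 49/18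

theorem sixthOrderSymbol_eq_one_sub_cos (y : ℝ) :
    sixthOrderSymbol y =
      2 * (1 - Real.cos y) + (1/3) * (1 - Real.cos y) ^ 2 + (4/45) * (1 - Real.cos y) ^ 3 := by
  rw [sixthOrderSymbol, Real.cos_three_mul, Real.cos_two_mul]
  ring

/-- `2 * (1 - cos y)` is the rescaled symbol of the second-order central difference. -/
theorem two_mul_one_sub_cos_le_sixthOrderSymbol (y : ℝ) :
    2 * (1 - Real.cos y) ≤ sixthOrderSymbol y := by
  have one_sub_cos_nonneg : 0 ≤ 1 - Real.cos y := sub_nonneg.2 (Real.cos_le_one y)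
  rw [sixthOrderSymbol_eq_one_sub_cos, add_assoc]
  exact le_add_of_nonneg_right (by positivity)

theorem four_div_pi_sq_mul_sq_le_two_mul_one_sub_cos {y : ℝ} (hy : |y| ≤ Real.pi) :
    4 / Real.pi ^ 2 * y ^ 2 ≤ 2 * (1 - Real.cos y) := by
  linear_combination 2 * Real.cos_le_one_sub_mul_cos_sq hy

/-- There is a constant `c > 0` with
`c·y² ≤ −(1/45)cos(3y) + (3/10)cos(2y) − 3cos(y) + 49/18` for all `|y| ≤ π`. -/
theorem sixth_order_symbol_lower_bound :
    ∃ c : ℝ, 0 < c ∧ ∀ y : ℝ, |y| ≤ Real.pi →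
      c * y^2 ≤ -(1/45) * Real.cos (3*y) + (3/10) * Real.cos (2*y) - 3 * Real.cos y + 49/18 := by
  refine ⟨4 / Real.pi ^ 2, by positivity, fun y hy => ?_⟩
  exact (four_div_pi_sq_mul_sq_le_two_mul_one_sub_cos hy).trans
    (two_mul_one_sub_cos_le_sixthOrderSymbol y)
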